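/- Let q be a power of an odd prime, let n be an odd positive integer, and let t be a positive integer. If h_q(n) = 0, then h_{q^{2^t}}(n) = 0. -/

import Mathlib

noncomputable section

/-- The cyclic shift operator on `Fin n → F`, sending `(a_0, …, a_{n-1})`
to `(a_{n-1}, a_0, …, a_{n-2})`. -/
def cshift (F : Type*) [Field F] (n : ℕ) : (Fin n → F) →ₗ[F] (Fin n → F) where
  toFun a := a ∘ (finRotate n).symm
  map_add' _ _ := rfl
  map_smul' _ _ := rfl

/-- A subspace `U ⊆ F^n` is cyclically covering if the union of its cyclic shifts is `F^n`. -/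
def IsCyclicallyCovering {F : Type*} [Field F] {n : ℕ} (U : Submodule F (Fin n → F)) : Prop :=
  ⋃ i ∈ Finset.range n, ⇑(cshift F n ^ i) '' (U : Set (Fin n → F)) = Set.univ

/-- `hcc F n` is the largest possible codimension of a cyclically covering subspace of `F^n`. -/
def hcc (F : Type*) [Field F] (n : ℕ) : ℕ :=
  sSup {k : ℕ | ∃ U : Submodule F (Fin n → F),
    IsCyclicallyCovering U ∧ n - Module.finrank F U = k}

theorem cshift_pow_apply (F : Type*) [Field F] (n i : ℕ) (a : Fin n → F) :
    (cshift F n ^ i) a = a ∘ ⇑((finRotate n)⁻¹ ^ i) := by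
  induction i generalizing a with
  | zero => rfl
  | succ k ih =>
    rw [pow_succ, Module.End.mul_apply, ih, pow_succ']
    rfl

theorem hcc_eq_zero_iff (F : Type*) [Field F] (n : ℕ) :
    hcc F n = 0 ↔ ∀ U : Submodule F (Fin n → F), IsCyclicallyCovering U → U = ⊤ := by
  constructor
  · intro h U hU
    have hb : BddAbove {k : ℕ | ∃ U : Submodule F (Fin n → F),
        IsCyclicallyCovering U ∧ n - Module.finrank F U = k} := by
      refine ⟨n, ?_⟩
      rintro k ⟨V, -, rfl⟩
      exact Nat.sub_le _ _
    have h1 := le_csSup hb ⟨U, hU, rfl⟩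
    change _ ≤ hcc F n at h1
    apply Submodule.eq_top_of_finrank_eq
    have h2 := Submodule.finrank_le U
    rw [Module.finrank_fin_fun] at h2 ⊢
    omega
  · intro h
    unfold hcc
    have hs : {k : ℕ | ∃ U : Submodule F (Fin n → F),
        IsCyclicallyCovering U ∧ n - Module.finrank F U = k} ⊆ {0} := by
      rintro k ⟨V, hV, rfl⟩
      rw [h V hV]
      simp
    rcases Set.subset_singleton_iff_eq.mp hs with h | h <;> rw [h] <;> simp

theorem hcc_ext (F K : Type*) [Field F] [Field K] [Algebra F K] (n : ℕ)
    (h0 : hcc F n = 0) : hcc K n = 0 := by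
  rw [hcc_eq_zero_iff] at h0 ⊢
  intro U hU
  let V : Submodule F (Fin n → F) :=
    (U.restrictScalars F).comap ((Algebra.linearMap F K).compLeft (Fin n))
  have hmem : ∀ a : Fin n → F, a ∈ V ↔ (fun j => algebraMap F K (a j)) ∈ U := fun a => Iff.rfl
  have hV : V = ⊤ := by
    apply h0
    unfold IsCyclicallyCovering at hU ⊢
    rw [Set.eq_univ_iff_forall] at hU ⊢
    intro a
    have h1 := hU (fun j => algebraMap F K (a j))
    simp only [Set.mem_iUnion] at h1 ⊢
    obtain ⟨i, hi, u, hu, hua⟩ := h1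
    refine ⟨i, hi, a ∘ ⇑((finRotate n) ^ i), ?_, ?_⟩
    · rw [SetLike.mem_coe, hmem]
      rw [SetLike.mem_coe] at hu
      convert hu using 1
      rw [cshift_pow_apply] at hua
      funext j
      have := congrFun hua (((finRotate n) ^ i) j)
      simp [Function.comp_apply, inv_pow] at this ⊢
      exact this.symm
    · rw [cshift_pow_apply]
      funext j
      simp [Function.comp_apply, inv_pow]
  rw [eq_top_iff, ← (Pi.basisFun K (Fin n)).span_eq, Submodule.span_le]
  rintro _ ⟨j, rfl⟩
  have h1 : (Pi.single j 1 : Fin n → F) ∈ V := hV ▸ Submodule.mem_top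
  rw [hmem] at h1
  rw [SetLike.mem_coe]
  convert h1 using 1
  funext k
  rw [Pi.basisFun_apply]
  by_cases hk : k = j
  · subst hk; simp
  · simp [hk]

theorem exists_hom (F K : Type*) [Field F] [Fintype F] [Field K] [Fintype K] (m : ℕ)
    (h : Fintype.card K = Fintype.card F ^ m) : Nonempty (F →+* K) := by
  obtain ⟨p, hp⟩ := CharP.exists F
  obtain ⟨a, hpp, ha⟩ := FiniteField.card F p
  haveI : Fact p.Prime := ⟨hpp⟩
  have hK : Fintype.card K = p ^ (a * m : ℕ) := by rw [h, ha, pow_mul]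
  haveI : CharP K p := charP_of_card_eq_prime_pow hK
  letI := ZMod.algebra F p
  letI := ZMod.algebra K p
  have h1 := Module.card_eq_pow_finrank (K := ZMod p) (V := F)
  have h2 := Module.card_eq_pow_finrank (K := ZMod p) (V := K)
  rw [ZMod.card] at h1 h2
  have e1 := Nat.pow_right_injective hpp.two_le (ha.symm.trans h1)
  have e2 := Nat.pow_right_injective hpp.two_le (hK.symm.trans h2)
  obtain ⟨f⟩ := FiniteField.nonempty_algHom_of_finrank_dvd (F := ZMod p) (K := F) (L := K)
    (by rw [← e1, ← e2]; exact dvd_mul_right _ _)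
  exact ⟨f.toRingHom⟩

/-- Let `q` be a power of an odd prime, `n` an odd positive integer, and `t` a positive
integer.  If `h_q(n) = 0`, then `h_{q^{2^t}}(n) = 0`.  (Here `K` is the field with
`q^{2^t}` elements.) -/
theorem stmt19 (F K : Type*) [Field F] [Fintype F] [Field K] [Fintype K]
    (hodd : Odd (Fintype.card F))
    (n : ℕ) (hn : 0 < n) (hnodd : Odd n)
    (t : ℕ) (ht : 0 < t)
    (hcardK : Fintype.card K = Fintype.card F ^ 2 ^ t)
    (h0 : hcc F n = 0) :
    hcc K n = 0 := by
  obtain ⟨f⟩ := exists_hom F K _ hcardK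
  letI := f.toAlgebra
  exact hcc_ext F K n h0
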